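/- arXiv:2304.00786 — 2 statements merged into one kernel-verified Lean document; each statement's English description precedes it below -/
import Mathlib

section
/- Let (G, ω, μ) be a connected, locally finite weighted graph and let d be an intrinsic pseudo metric on G with finite jump size s such that every ball B_r(x) is a finite set. Let V : G → ℝ satisfy V ≥ 0 on G and V(x) ≥ c₀ d(x,x₀)^{-α} for all x ∈ G \ B_{R₀}(x₀), for some fixed x₀ ∈ G, R₀ > 0, c₀ > 0 and α ∈ [0,1]. Suppose there exists Λ ∈ (0,1) such that ∑_{x ∈ G \ B₁(x₀)} e^{-Λ d(x,x₀)^α} μ(x) < ∞. Then every bounded function u : G → ℝ satisfying Δu(x) − V(x)u(x) = 0 for all x ∈ G is identically zero. -/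
lemma aux_pow (a b : ℝ) (ha : 0 ≤ a) (hb : 0 ≤ b) (k : ℕ) :
    ((k : ℝ) + 1) * a ^ k * (b - a) ≤ b ^ (k + 1) - a ^ (k + 1) := by
  induction k with
  | zero => simp
  | succ k ih =>
    have h1 := mul_le_mul_of_nonneg_left ih hb
    have h2 : 0 ≤ ((k : ℝ) + 1) * a ^ k * (b - a) ^ 2 := by positivity
    push_cast
    have e1 : b ^ (k + 1 + 1) = b * b ^ (k + 1) := by ring
    have e2 : a ^ (k + 1 + 1) = a * a * a ^ k := by ring
    have e3 : a ^ (k + 1) = a * a ^ k := by ring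
    rw [e3] at h1
    rw [e1, e2, e3]
    nlinarith

lemma aux_exp (t b : ℝ) (hb : |t| ≤ b) : |1 - Real.exp t| ≤ Real.exp b * |t| := by
  have hb0 : 0 ≤ b := (abs_nonneg t).trans hb
  have h1 : 1 ≤ Real.exp b := Real.one_le_exp hb0
  have ht := abs_le.1 hb
  rcases le_total 0 t with h | h
  · rw [abs_of_nonneg h, abs_of_nonpos (by linarith [Real.one_le_exp h])]
    have h2 := Real.add_one_le_exp (-t)
    have h3 : Real.exp t * Real.exp (-t) = 1 := by rw [← Real.exp_add]; simp
    have h4 : Real.exp t ≤ Real.exp b := Real.exp_le_exp.2 ht.2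
    have h5 := mul_le_mul_of_nonneg_left h2 (Real.exp_pos t).le
    have h6 := mul_le_mul_of_nonneg_right h4 h
    nlinarith
  · rw [abs_of_nonpos h, abs_of_nonneg (by linarith [Real.exp_le_one_iff.2 h])]
    have h2 := Real.add_one_le_exp t
    nlinarith

/-- Caccioppoli-type inequality. -/
lemma aux_core {G : Type*} (μ : G → ℝ) (ω : G → G → ℝ) (d : G → G → ℝ)
    (hμ : ∀ x, 0 < μ x)
    (hω_symm : ∀ x y, ω x y = ω y x)
    (hω_nonneg : ∀ x y, 0 ≤ ω x y)
    (hloc : ∀ x : G, {y : G | 0 < ω x y}.Finite)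
    (hintr : ∀ x : G, (μ x)⁻¹ * ∑' y, ω x y * d x y ^ 2 ≤ 1)
    (W v φ E : G → ℝ) (hW : ∀ x, 0 ≤ W x) (hE : ∀ x, 0 ≤ E x) (hv : ∀ x, 0 ≤ v x)
    (hφ : {x | φ x ≠ 0}.Finite)
    (hsub : ∀ x, μ x * (W x * v x) ≤ ∑' y, ω x y * (v y - v x))
    (hφE : ∀ x y, 0 < ω x y → (φ x - φ y) ^ 2 ≤ E x * d x y ^ 2)
    (B : ℝ) (hB : ∀ F : Finset G, ∑ x ∈ F, v x ^ 2 * E x * μ x ≤ B) (F : Finset G) :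
    ∑ x ∈ F, W x * v x ^ 2 * φ x ^ 2 * μ x ≤ B / 2 := by
  classical
  let S := hφ.toFinset
  let F' := F ∪ S ∪ S.biUnion (fun x => (hloc x).toFinset)
  have hF : F ⊆ F' := by
    intro x hx; simp only [F', Finset.mem_union]; exact Or.inl (Or.inl hx)
  have hS : ∀ x ∈ S, ∀ y ∉ F', ω x y = 0 := by
    intro x hx y hy
    by_contra h
    have : 0 < ω x y := lt_of_le_of_ne (hω_nonneg x y) (Ne.symm h)
    apply hy
    simp only [F', Finset.mem_union, Finset.mem_biUnion]
    exact Or.inr ⟨x, hx, by simpa using this⟩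
  have key1 : ∀ x, W x * v x ^ 2 * φ x ^ 2 * μ x ≤
      ∑ y ∈ F', ω x y * (v y - v x) * (v x * φ x ^ 2) := by
    intro x
    by_cases hx : φ x = 0
    · simp [hx]
    · have hxS : x ∈ S := by simpa [S] using hx
      have h1 := hsub x
      rw [tsum_eq_sum (s := F') (by intro y hy; rw [hS x hxS y hy]; simp)] at h1
      rw [← Finset.sum_mul]
      have := mul_le_mul_of_nonneg_right h1 (show 0 ≤ v x * φ x ^ 2 by have := hv x; positivity)
      refine le_trans (le_of_eq ?_) this
      ring
  have hd2 : ∀ x, ∑ y ∈ F', ω x y * d x y ^ 2 ≤ μ x := by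
    intro x
    have h1 := hintr x
    rw [inv_mul_le_iff₀ (hμ x), mul_one] at h1
    refine le_trans (Summable.sum_le_tsum F' (fun y _ => ?_) ?_) h1
    · have := hω_nonneg x y; positivity
    · apply summable_of_hasFiniteSupport
      refine (hloc x).subset ?_
      intro y hy
      refine lt_of_le_of_ne (hω_nonneg x y) ?_
      intro h
      apply hy
      simp [← h]
  have key2 : ∑ x ∈ F', ∑ y ∈ F', ω x y * (v y - v x) * (v x * φ x ^ 2) ≤
      (∑ x ∈ F', ∑ y ∈ F', ω x y * v x ^ 2 * (φ x - φ y) ^ 2) / 2 := by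
    have sw : ∑ x ∈ F', ∑ y ∈ F', ω x y * (v y - v x) * (v x * φ x ^ 2) =
        ∑ x ∈ F', ∑ y ∈ F', ω x y * (v x - v y) * (v y * φ y ^ 2) := by
      rw [Finset.sum_comm]
      refine Finset.sum_congr rfl fun x _ => Finset.sum_congr rfl fun y _ => ?_
      rw [hω_symm y x]
    have sw2 : ∑ x ∈ F', ∑ y ∈ F', ω x y * v x ^ 2 * (φ x - φ y) ^ 2 =
        ∑ x ∈ F', ∑ y ∈ F', ω x y * v y ^ 2 * (φ x - φ y) ^ 2 := by
      rw [Finset.sum_comm]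
      refine Finset.sum_congr rfl fun x _ => Finset.sum_congr rfl fun y _ => ?_
      rw [hω_symm y x]; ring
    have main : (∑ x ∈ F', ∑ y ∈ F', ω x y * (v y - v x) * (v x * φ x ^ 2)) +
        (∑ x ∈ F', ∑ y ∈ F', ω x y * (v x - v y) * (v y * φ y ^ 2)) ≤
        ((∑ x ∈ F', ∑ y ∈ F', ω x y * v x ^ 2 * (φ x - φ y) ^ 2) +
        ∑ x ∈ F', ∑ y ∈ F', ω x y * v y ^ 2 * (φ x - φ y) ^ 2) / 2 := by
      rw [← Finset.sum_add_distrib, ← Finset.sum_add_distrib, Finset.sum_div]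
      refine Finset.sum_le_sum fun x _ => ?_
      rw [← Finset.sum_add_distrib, ← Finset.sum_add_distrib, Finset.sum_div]
      refine Finset.sum_le_sum fun y _ => ?_
      have h0 := hω_nonneg x y
      have e : (ω x y * v x ^ 2 * (φ x - φ y) ^ 2 + ω x y * v y ^ 2 * (φ x - φ y) ^ 2) / 2 -
        (ω x y * (v y - v x) * (v x * φ x ^ 2) + ω x y * (v x - v y) * (v y * φ y ^ 2)) =
        ω x y * ((v x * φ x - v y * φ y) ^ 2 + ((v x - v y) * (φ x - φ y)) ^ 2 / 2) := by ring
      have : 0 ≤ ω x y * ((v x * φ x - v y * φ y) ^ 2 + ((v x - v y) * (φ x - φ y)) ^ 2 / 2) := by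
        positivity
      linarith
    rw [← sw, ← sw2] at main
    linarith
  have key3 : ∑ x ∈ F', ∑ y ∈ F', ω x y * v x ^ 2 * (φ x - φ y) ^ 2 ≤
      ∑ x ∈ F', v x ^ 2 * E x * μ x := by
    refine Finset.sum_le_sum fun x _ => ?_
    have h1 : ∑ y ∈ F', ω x y * v x ^ 2 * (φ x - φ y) ^ 2 ≤
        ∑ y ∈ F', v x ^ 2 * E x * (ω x y * d x y ^ 2) := by
      refine Finset.sum_le_sum fun y _ => ?_
      rcases (hω_nonneg x y).eq_or_lt with h | h
      · simp [← h]
      · have := mul_le_mul_of_nonneg_left (hφE x y h) (show 0 ≤ ω x y * v x ^ 2 by positivity)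
        refine this.trans (le_of_eq (by ring))
    rw [← Finset.mul_sum] at h1
    refine h1.trans (mul_le_mul_of_nonneg_left (hd2 x) ?_)
    have := hE x
    positivity
  calc ∑ x ∈ F, W x * v x ^ 2 * φ x ^ 2 * μ x
      ≤ ∑ x ∈ F', W x * v x ^ 2 * φ x ^ 2 * μ x := by
        refine Finset.sum_le_sum_of_subset_of_nonneg hF fun x _ _ => ?_
        have := hW x
        have := (hμ x).le
        positivity
    _ ≤ ∑ x ∈ F', ∑ y ∈ F', ω x y * (v y - v x) * (v x * φ x ^ 2) :=
        Finset.sum_le_sum fun x _ => key1 x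
    _ ≤ _ := key2
    _ ≤ B / 2 := by linarith [key3, hB F']

/-- Maximum principle: the supremum is approached outside every ball. -/
lemma aux_max {G : Type*} [Infinite G]
    (μ : G → ℝ) (ω : G → G → ℝ) (d : G → G → ℝ)
    (hμ : ∀ x, 0 < μ x)
    (hω_nonneg : ∀ x y, 0 ≤ ω x y)
    (hloc : ∀ x : G, {y : G | 0 < ω x y}.Finite)
    (hconn : ∀ x y : G, x ≠ y → ∃ (n : ℕ) (p : ℕ → G),
      p 0 = x ∧ p n = y ∧ ∀ i < n, 0 < ω (p i) (p (i + 1)))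
    (hballs : ∀ (x : G) (r : ℝ), {y : G | d y x < r}.Finite)
    (V : G → ℝ) (x₀ : G) (R : ℝ) (hV₀ : ∀ x, 0 ≤ V x) (u : G → ℝ)
    (hu : ∀ x : G, ∑' y, ω x y * (u y - u x) = μ x * (V x * u x))
    (θ : ℝ) (hθ : 0 ≤ θ) (x' : G) (hx' : θ < u x') : ∃ x, R ≤ d x x₀ ∧ θ < u x := by
  by_contra! hcon
  have hx'b : x' ∈ {y : G | d y x₀ < R} := by
    by_contra h
    simp only [Set.mem_setOf_eq, not_lt] at h
    exact absurd (hcon x' h) (not_le.2 hx')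
  obtain ⟨m, hm, hmax⟩ := Set.exists_max_image _ u (hballs x₀ R) ⟨x', hx'b⟩
  have hmθ : θ < u m := hx'.trans_le (hmax x' hx'b)
  have hglob : ∀ x, u x ≤ u m := by
    intro x
    by_cases h : d x x₀ < R
    · exact hmax x h
    · exact (hcon x (not_lt.1 h)).trans hmθ.le
  have step : ∀ x z, u x = u m → 0 < ω x z → u z = u m := by
    intro x z hx hz
    have h1 := hu x
    rw [tsum_eq_sum (s := (hloc x).toFinset) (by
      intro y hy
      have : ω x y = 0 := by
        have : ¬ 0 < ω x y := by simpa using hy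
        exact le_antisymm (not_lt.1 this) (hω_nonneg x y)
      simp [this])] at h1
    have h2 : 0 ≤ ∑ y ∈ (hloc x).toFinset, ω x y * (u y - u x) := by
      rw [h1, hx]
      exact mul_nonneg (hμ x).le (mul_nonneg (hV₀ x) (hθ.trans hmθ.le))
    have hterm : ∀ y ∈ (hloc x).toFinset, ω x y * (u y - u x) ≤ 0 := fun y _ =>
      mul_nonpos_of_nonneg_of_nonpos (hω_nonneg x y) (by rw [hx]; linarith [hglob y])
    have h3 := (Finset.sum_eq_zero_iff_of_nonpos hterm).1
      (le_antisymm (Finset.sum_nonpos hterm) h2) z (by simpa using hz)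
    rcases mul_eq_zero.1 h3 with h | h
    · exact absurd h hz.ne'
    · linarith
  obtain ⟨y, hy⟩ := (hballs x₀ R).exists_notMem
  simp only [Set.mem_setOf_eq, not_lt] at hy
  have hym : m ≠ y := by
    rintro rfl
    exact absurd hm (not_lt.2 hy)
  obtain ⟨n, p, hp0, hpn, hp⟩ := hconn m y hym
  have hpath : ∀ i ≤ n, u (p i) = u m := by
    intro i
    induction i with
    | zero => intro _; rw [hp0]
    | succ i ih => intro hi; exact step _ _ (ih (by omega)) (hp i (by omega))
  have := hpath n le_rfl
  rw [hpn] at this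
  linarith [hcon y hy]

lemma aux_nonpos {G : Type*} [Infinite G]
    (μ : G → ℝ) (ω : G → G → ℝ) (d : G → G → ℝ)
    (hμ : ∀ x, 0 < μ x)
    (hω_symm : ∀ x y, ω x y = ω y x)
    (hω_nonneg : ∀ x y, 0 ≤ ω x y)
    (hloc : ∀ x : G, {y : G | 0 < ω x y}.Finite)
    (hconn : ∀ x y : G, x ≠ y → ∃ (n : ℕ) (p : ℕ → G),
      p 0 = x ∧ p n = y ∧ ∀ i < n, 0 < ω (p i) (p (i + 1)))
    (hd_symm : ∀ x y, d x y = d y x)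
    (hd_nonneg : ∀ x y, 0 ≤ d x y)
    (hd_tri : ∀ x y z, d x y ≤ d x z + d z y)
    (s : ℝ) (hs0 : 0 ≤ s) (hs : ∀ x y, 0 < ω x y → d x y ≤ s)
    (hballs : ∀ (x : G) (r : ℝ), {y : G | d y x < r}.Finite)
    (hintr : ∀ x : G, (μ x)⁻¹ * ∑' y, ω x y * d x y ^ 2 ≤ 1)
    (V : G → ℝ) (x₀ : G) (R c : ℝ)
    (hR : 1 ≤ R) (hc : 0 < c)
    (hV₀ : ∀ x, 0 ≤ V x)
    (hVlow : ∀ x : G, R ≤ d x x₀ → c / d x x₀ ≤ V x)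
    (a : ℝ) (ha : 0 < a) (Q : ℝ) (hQ0 : 0 ≤ Q)
    (hQ : ∀ F : Finset G, ∑ x ∈ F, (if R ≤ d x x₀ then Real.exp (-a * d x x₀) * μ x else 0) ≤ Q)
    (u : G → ℝ) (hbd : ∃ C : ℝ, ∀ x, |u x| ≤ C)
    (hu : ∀ x : G, ∑' y, ω x y * (u y - u x) = μ x * (V x * u x)) (x : G) : u x ≤ 0 := by
  classical
  by_contra! hpos
  obtain ⟨C, hC⟩ := hbd
  have hbdd : BddAbove (Set.range u) := ⟨C, by rintro _ ⟨y, rfl⟩; exact (abs_le.1 (hC y)).2⟩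
  set M := sSup (Set.range u) with hM
  have hleM : ∀ y, u y ≤ M := fun y => le_csSup hbdd ⟨y, rfl⟩
  have hM0 : 0 < M := hpos.trans_le (hleM x)
  -- constants
  set D := a ^ 2 * Real.exp (a * s) ^ 2 with hD
  have hDpos : 0 < D := by positivity
  set r := Real.exp (-(a * c / D) / 2) with hr
  have hr0 : 0 < r := Real.exp_pos _
  have hr1 : r < 1 := by
    rw [hr, Real.exp_lt_one_iff]
    have : 0 < a * c / D := by positivity
    linarith
  have hrq : r ^ 2 = Real.exp (-(a * c / D)) := by
    rw [hr, ← Real.exp_nat_mul]; congr 1; push_cast; ring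
  obtain ⟨x₁, hx₁d, hx₁u⟩ : ∃ x, R ≤ d x x₀ ∧ r * M < u x := by
    obtain ⟨_, ⟨x', rfl⟩, hx'⟩ := exists_lt_of_lt_csSup (Set.range_nonempty u)
      (show r * M < sSup (Set.range u) by rw [← hM]; nlinarith)
    exact aux_max μ ω d hμ hω_nonneg hloc hconn hballs V x₀ R hV₀ u hu (r * M) (by positivity)
      x' hx'
  set w : G → ℝ := fun y => max (u y) 0 / M with hw
  have hw0 : ∀ y, 0 ≤ w y := fun y => by simp only [hw]; positivity
  have hw1 : ∀ y, w y ≤ 1 := fun y => by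
    simp only [hw]; rw [div_le_one hM0]; exact max_le (hleM y) hM0.le
  have hwx1 : r ≤ w x₁ := by
    simp only [hw]; rw [le_div_iff₀ hM0]; exact hx₁u.le.trans (le_max_left _ _)
  have htsum : ∀ (f : G → ℝ) (x : G), ∑' y, ω x y * f y = ∑ y ∈ (hloc x).toFinset, ω x y * f y := by
    intro f x
    refine tsum_eq_sum ?_
    intro y hy
    have : ω x y = 0 := by
      have : ¬ 0 < ω x y := by simpa using hy
      exact le_antisymm (not_lt.1 this) (hω_nonneg x y)
    simp [this]
  have hwsub : ∀ x, μ x * (V x * w x) ≤ ∑' y, ω x y * (w y - w x) := by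
    intro x
    rcases le_total (u x) 0 with h | h
    · have hwx : w x = 0 := by simp [hw, h]
      rw [hwx]
      simp only [mul_zero, sub_zero]
      exact tsum_nonneg fun y => mul_nonneg (hω_nonneg x y) (hw0 y)
    · have hwx : w x = u x / M := by simp [hw, h]
      have h1 : μ x * (V x * w x) = (∑' y, ω x y * (u y - u x)) / M := by
        rw [hu x, hwx]; ring
      rw [h1, htsum (fun y => u y - u x), htsum (fun y => w y - w x), Finset.sum_div]
      refine Finset.sum_le_sum fun y _ => ?_
      rw [mul_div_assoc]
      refine mul_le_mul_of_nonneg_left ?_ (hω_nonneg x y)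
      rw [hwx, sub_div]
      have : u y / M ≤ w y := by
        simp only [hw]; gcongr; exact le_max_left _ _
      linarith
  -- the weight
  set g : G → ℝ := fun y => max (d y x₀ - (R + s)) 0 with hg
  set ψ : G → ℝ := fun y => Real.exp (-(a * g y)) with hψ
  set E : G → ℝ := fun y => if R ≤ d y x₀ then D * ψ y ^ 2 else 0 with hE
  have hψ0 : ∀ y, 0 < ψ y := fun y => Real.exp_pos _
  have hE0 : ∀ y, 0 ≤ E y := fun y => by
    simp only [hE]; split_ifs
    · have := hψ0 y; positivity
    · exact le_rfl
  have hψE : ∀ y z, 0 < ω y z → (ψ y - ψ z) ^ 2 ≤ E y * d y z ^ 2 := by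
    intro y z hyz
    have hds := hs y z hyz
    have t1 := hd_tri y x₀ z
    have t2 := hd_tri z x₀ y
    rw [hd_symm z y] at t2
    by_cases hy : R ≤ d y x₀
    · have hEy : E y = D * ψ y ^ 2 := by simp [hE, hy]
      have hgg : |g y - g z| ≤ d y z := by
        refine (abs_max_sub_max_le_abs _ _ _).trans ?_
        rw [abs_le]; constructor <;> linarith
      have e : ψ y - ψ z = ψ y * (1 - Real.exp (a * (g y - g z))) := by
        simp only [hψ]
        rw [mul_sub, mul_one, ← Real.exp_add]
        congr 2; ring
      have hag : |a * (g y - g z)| ≤ a * d y z := by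
        rw [abs_mul, abs_of_pos ha]; gcongr
      have h2 : |1 - Real.exp (a * (g y - g z))| ≤ Real.exp (a * s) * (a * d y z) := by
        refine (aux_exp _ (a * s) (hag.trans (by gcongr))).trans ?_
        gcongr
      have h3 : (1 - Real.exp (a * (g y - g z))) ^ 2 ≤ (Real.exp (a * s) * (a * d y z)) ^ 2 := by
        rw [← sq_abs]; gcongr
      rw [e, hEy, mul_pow]
      calc _ ≤ ψ y ^ 2 * (Real.exp (a * s) * (a * d y z)) ^ 2 := by gcongr
        _ = _ := by rw [hD]; ring
    · have hEy : E y = 0 := by simp [hE, hy]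
      have hgy : g y = 0 := max_eq_right (by linarith)
      have hgz : g z = 0 := max_eq_right (by linarith)
      simp [hEy, hψ, hgy, hgz]
  set K := D * Real.exp (2 * a * (R + s)) with hK
  have hK0 : 0 < K := by positivity
  -- main estimate for each power
  have main : ∀ k : ℕ, ((k : ℝ) + 1) * (V x₁ * ψ x₁ ^ 2 * μ x₁) * (w x₁ ^ 2) ^ (k + 1) ≤
      K * Q * (r ^ 2) ^ (k + 1) := by
    intro k
    set v : G → ℝ := fun y => w y ^ (k + 1) with hv
    have hv0 : ∀ y, 0 ≤ v y := fun y => pow_nonneg (hw0 y) _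
    have hv1 : ∀ y, v y ≤ 1 := fun y => pow_le_one₀ (hw0 y) (hw1 y)
    set W : G → ℝ := fun y => ((k : ℝ) + 1) * V y with hW
    have hW0 : ∀ y, 0 ≤ W y := fun y => by have := hV₀ y; simp only [hW]; positivity
    have hvsub : ∀ x, μ x * (W x * v x) ≤ ∑' y, ω x y * (v y - v x) := by
      intro x
      have h1 := hwsub x
      rw [htsum (fun y => w y - w x)] at h1
      rw [htsum (fun y => v y - v x)]
      have h2 := mul_le_mul_of_nonneg_left h1
        (show 0 ≤ ((k : ℝ) + 1) * w x ^ k by have := hw0 x; positivity)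
      calc μ x * (W x * v x) = ((k : ℝ) + 1) * w x ^ k * (μ x * (V x * w x)) := by
            simp only [hW, hv]; ring
        _ ≤ _ := h2
        _ ≤ _ := by
            rw [Finset.mul_sum]
            refine Finset.sum_le_sum fun y _ => ?_
            have := mul_le_mul_of_nonneg_left (aux_pow (w x) (w y) (hw0 x) (hw0 y) k)
              (hω_nonneg x y)
            refine le_trans (le_of_eq ?_) this
            ring
    set L := ((k : ℝ) + 1) * c / D with hL
    have hL0 : 0 < L := by positivity
    set BL := (hballs x₀ L).toFinset with hBL
    set P := K * Q * (r ^ 2) ^ (k + 1) with hP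
    have heL : Real.exp (-(a * L)) = (r ^ 2) ^ (k + 1) := by
      rw [hrq, ← Real.exp_nat_mul]; congr 1; rw [hL]; push_cast; ring
    have hBsum : ∀ F : Finset G, ∑ y ∈ F, v y ^ 2 * E y * μ y ≤
        ∑ y ∈ BL, v y ^ 2 * E y * μ y + P := by
      intro F
      have hnn : ∀ y, 0 ≤ v y ^ 2 * E y * μ y := fun y => by
        have := hE0 y; have := (hμ y).le; positivity
      have h1 : ∀ y ∈ F, v y ^ 2 * E y * μ y ≤ (if y ∈ BL then v y ^ 2 * E y * μ y else 0) +
          K * (r ^ 2) ^ (k + 1) * (if R ≤ d y x₀ then Real.exp (-a * d y x₀) * μ y else 0) := by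
        intro y _
        have hμy := hμ y
        by_cases hy : y ∈ BL
        · rw [if_pos hy]
          have : 0 ≤ K * (r ^ 2) ^ (k + 1) *
            (if R ≤ d y x₀ then Real.exp (-a * d y x₀) * μ y else 0) := by
            split_ifs <;> positivity
          linarith
        · rw [if_neg hy, zero_add]
          have hLy : L ≤ d y x₀ := by simpa [hBL] using hy
          by_cases hyR : R ≤ d y x₀
          · have hEy : E y = D * ψ y ^ 2 := by simp [hE, hyR]
            rw [if_pos hyR, hEy, ← heL]
            have hψb : ψ y ^ 2 ≤ Real.exp (2 * a * (R + s)) *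
                (Real.exp (-(a * L)) * Real.exp (-a * d y x₀)) := by
              simp only [hψ]
              rw [← Real.exp_nat_mul, ← Real.exp_add, ← Real.exp_add, Real.exp_le_exp]
              have hgy : d y x₀ - (R + s) ≤ g y := le_max_left _ _
              push_cast
              nlinarith
            have hv2 : v y ^ 2 ≤ 1 := pow_le_one₀ (hv0 y) (hv1 y)
            calc v y ^ 2 * (D * ψ y ^ 2) * μ y ≤ 1 * (D * (Real.exp (2 * a * (R + s)) *
                (Real.exp (-(a * L)) * Real.exp (-a * d y x₀)))) * μ y := by gcongr
              _ = _ := by rw [hK]; ring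
          · have hEy : E y = 0 := by simp [hE, hyR]
            simp [hEy, hyR]
      refine (Finset.sum_le_sum h1).trans ?_
      rw [Finset.sum_add_distrib, ← Finset.mul_sum]
      refine add_le_add ?_ ?_
      · rw [← Finset.sum_filter]
        refine Finset.sum_le_sum_of_subset_of_nonneg ?_ fun y _ _ => hnn y
        intro y hy
        exact (Finset.mem_filter.1 hy).2
      · have := mul_le_mul_of_nonneg_left (hQ F) (show 0 ≤ K * (r ^ 2) ^ (k + 1) by positivity)
        refine this.trans (le_of_eq ?_)
        rw [hP]; ring
    set F := insert x₁ BL with hF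
    -- truncated estimate
    have htr : ∀ ε : ℝ, 0 < ε → ∑ y ∈ F, W y * v y ^ 2 * (max (ψ y - ε) 0) ^ 2 * μ y ≤
        (∑ y ∈ BL, v y ^ 2 * E y * μ y + P) / 2 := by
      intro ε hε
      refine aux_core μ ω d hμ hω_symm hω_nonneg hloc hintr W v (fun y => max (ψ y - ε) 0) E
        hW0 hE0 hv0 ?_ hvsub ?_ _ hBsum F
      · refine (hballs x₀ (R + s + 1 - Real.log ε / a)).subset ?_
        intro y hy
        by_contra hcon
        apply hy
        apply max_eq_right
        simp only [Set.mem_setOf_eq, not_lt] at hcon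
        have hgy : d y x₀ - (R + s) ≤ g y := le_max_left _ _
        have h1 : -(a * g y) ≤ Real.log ε := by
          have h2 : -Real.log ε / a ≤ g y := by rw [neg_div]; linarith
          rw [div_le_iff₀ ha] at h2
          linarith
        have : ψ y ≤ ε := by
          simp only [hψ]
          rw [← Real.le_log_iff_exp_le hε]; exact h1
        linarith
      · intro y z hyz
        refine le_trans ?_ (hψE y z hyz)
        rw [sq_le_sq]
        refine (abs_max_sub_max_le_abs _ _ _).trans (le_of_eq ?_)
        congr 1; ring
    have hlim : ∑ y ∈ F, W y * v y ^ 2 * ψ y ^ 2 * μ y ≤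
        (∑ y ∈ BL, v y ^ 2 * E y * μ y + P) / 2 := by
      have hcont : Continuous fun ε : ℝ =>
          ∑ y ∈ F, W y * v y ^ 2 * (max (ψ y - ε) 0) ^ 2 * μ y := by fun_prop
      have ht : Filter.Tendsto (fun ε : ℝ =>
          ∑ y ∈ F, W y * v y ^ 2 * (max (ψ y - ε) 0) ^ 2 * μ y) (nhdsWithin 0 (Set.Ioi 0))
          (nhds (∑ y ∈ F, W y * v y ^ 2 * (max (ψ y - 0) 0) ^ 2 * μ y)) :=
        (hcont.tendsto 0).mono_left nhdsWithin_le_nhds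
      have := le_of_tendsto ht (Filter.eventually_of_mem self_mem_nhdsWithin
        fun ε hε => htr ε hε)
      refine le_trans (le_of_eq ?_) this
      refine Finset.sum_congr rfl fun y _ => ?_
      rw [sub_zero, max_eq_left (hψ0 y).le]
    have hnn : ∀ y, 0 ≤ W y * v y ^ 2 * ψ y ^ 2 * μ y := fun y => by
      have := hW0 y; have := (hμ y).le; positivity
    have habs : ∑ y ∈ BL, v y ^ 2 * E y * μ y ≤ ∑ y ∈ F, W y * v y ^ 2 * ψ y ^ 2 * μ y := by
      refine le_trans (Finset.sum_le_sum fun y hy => ?_)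
        (Finset.sum_le_sum_of_subset_of_nonneg (Finset.subset_insert x₁ BL) fun y _ _ => hnn y)
      have hyL : d y x₀ < L := by simpa [hBL] using hy
      have hμy := hμ y
      by_cases hyR : R ≤ d y x₀
      · have hEy : E y = D * ψ y ^ 2 := by simp [hE, hyR]
        rw [hEy]
        have hdy : 0 < d y x₀ := by linarith
        have hDW : D ≤ W y := by
          have h1 := hVlow y hyR
          have h2 : c / L ≤ c / d y x₀ := by gcongr
          have h3 : D = ((k : ℝ) + 1) * (c / L) := by rw [hL]; field_simp
          rw [h3]
          simp only [hW]
          have := h2.trans h1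
          gcongr
        calc v y ^ 2 * (D * ψ y ^ 2) * μ y = D * (v y ^ 2 * ψ y ^ 2 * μ y) := by ring
          _ ≤ W y * (v y ^ 2 * ψ y ^ 2 * μ y) := by gcongr
          _ = _ := by ring
      · have hEy : E y = 0 := by simp [hE, hyR]
        rw [hEy]
        simpa using hnn y
    have hfin : ∑ y ∈ F, W y * v y ^ 2 * ψ y ^ 2 * μ y ≤ P := by linarith
    have hone := Finset.single_le_sum (f := fun y => W y * v y ^ 2 * ψ y ^ 2 * μ y)
      (fun y _ => hnn y) (Finset.mem_insert_self x₁ BL)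
    refine le_trans (le_of_eq ?_) (hone.trans hfin)
    simp only [hW, hv]
    ring
  -- conclusion
  have hA : 0 < V x₁ * ψ x₁ ^ 2 * μ x₁ := by
    have h1 := hVlow x₁ hx₁d
    have h2 : 0 < d x₁ x₀ := by linarith
    have h3 : 0 < V x₁ := lt_of_lt_of_le (by positivity) h1
    have := hψ0 x₁
    have := hμ x₁
    positivity
  obtain ⟨k, hk⟩ := exists_nat_gt (K * Q / (V x₁ * ψ x₁ ^ 2 * μ x₁))
  rw [div_lt_iff₀ hA] at hk
  have h1 := main k
  have h2 : (r ^ 2) ^ (k + 1) ≤ (w x₁ ^ 2) ^ (k + 1) := by gcongr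
  have h3 : 0 < (w x₁ ^ 2) ^ (k + 1) := lt_of_lt_of_le (by positivity) h2
  have h4 : K * Q * (r ^ 2) ^ (k + 1) ≤ K * Q * (w x₁ ^ 2) ^ (k + 1) := by gcongr
  have h5 := le_of_mul_le_mul_right (h1.trans h4) h3
  nlinarith

/-- **Liouville theorem for Δu − Vu = 0 on infinite graphs** (Theorem 2.4).
Under the standing assumptions on the weighted graph `(G, ω, μ)`, on the intrinsic
pseudo metric `d` with finite jump size `s` and finite balls, and under the lower
bound `V(x) ≥ c₀ d(x,x₀)^{-α}` outside `B_{R₀}(x₀)` together with the summability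
condition `∑_{x ∉ B₁(x₀)} e^{-Λ d(x,x₀)^α} μ(x) < ∞`, every bounded solution of
`Δu − Vu = 0` vanishes identically. -/
theorem stmt0 {G : Type*} [Countable G] [Infinite G]
    (μ : G → ℝ) (ω : G → G → ℝ) (d : G → G → ℝ)
    (hμ : ∀ x, 0 < μ x)
    (hω_symm : ∀ x y, ω x y = ω y x)
    (hω_diag : ∀ x, ω x x = 0)
    (hω_nonneg : ∀ x y, 0 ≤ ω x y)
    (hω_sum : ∀ x, Summable fun y => ω x y)
    (hloc : ∀ x : G, {y : G | 0 < ω x y}.Finite)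
    (hconn : ∀ x y : G, x ≠ y → ∃ (n : ℕ) (p : ℕ → G),
      p 0 = x ∧ p n = y ∧ ∀ i < n, 0 < ω (p i) (p (i + 1)))
    (hd_symm : ∀ x y, d x y = d y x)
    (hd_diag : ∀ x, d x x = 0)
    (hd_nonneg : ∀ x y, 0 ≤ d x y)
    (hd_tri : ∀ x y z, d x y ≤ d x z + d z y)
    (s : ℝ) (hs : ∀ x y, 0 < ω x y → d x y ≤ s)
    (hballs : ∀ (x : G) (r : ℝ), {y : G | d y x < r}.Finite)
    (hintr : ∀ x : G, (μ x)⁻¹ * ∑' y, ω x y * d x y ^ 2 ≤ 1)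
    (V : G → ℝ) (x₀ : G) (R₀ c₀ α : ℝ)
    (hR₀ : 0 < R₀) (hc₀ : 0 < c₀) (hα₀ : 0 ≤ α) (hα₁ : α ≤ 1)
    (hV₀ : ∀ x, 0 ≤ V x)
    (hVlow : ∀ x : G, R₀ ≤ d x x₀ → c₀ * d x x₀ ^ (-α) ≤ V x)
    (Λ : ℝ) (hΛ₀ : 0 < Λ) (hΛ₁ : Λ < 1)
    (hsum : Summable fun x : {x : G // 1 ≤ d x x₀} =>
      Real.exp (-Λ * d x.1 x₀ ^ α) * μ x.1) :
    ∀ u : G → ℝ, (∃ C : ℝ, ∀ x, |u x| ≤ C) →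
      (∀ x : G, (μ x)⁻¹ * (∑' y, ω x y * (u y - u x)) - V x * u x = 0) →
      ∀ x : G, u x = 0 := by
  intro u hbd hu
  set R := max R₀ 1 with hR
  have hR1 : 1 ≤ R := le_max_right _ _
  have hpow : ∀ x, R ≤ d x x₀ → d x x₀ ^ α ≤ d x x₀ := by
    intro x hx
    have := Real.rpow_le_rpow_of_exponent_le (hR1.trans hx) hα₁
    rwa [Real.rpow_one] at this
  have hV1 : ∀ x : G, R ≤ d x x₀ → c₀ / d x x₀ ≤ V x := by
    intro x hx
    refine le_trans ?_ (hVlow x ((le_max_left _ _).trans hx))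
    have h1 : 0 < d x x₀ := by linarith
    rw [Real.rpow_neg h1.le, ← div_eq_mul_inv]
    have h2 : 0 < d x x₀ ^ α := Real.rpow_pos_of_pos h1 α
    have := hpow x hx
    gcongr
  set m : G → ℝ := Set.indicator {x : G | 1 ≤ d x x₀}
    (fun x => Real.exp (-Λ * d x x₀ ^ α) * μ x) with hm
  have hms : Summable m := by
    rw [hm, ← summable_subtype_iff_indicator]; exact hsum
  have hm0 : ∀ x, 0 ≤ m x := fun x =>
    Set.indicator_nonneg (fun y _ => mul_nonneg (Real.exp_pos _).le (hμ y).le) x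
  have hQ : ∀ F : Finset G, ∑ x ∈ F,
      (if R ≤ d x x₀ then Real.exp (-Λ * d x x₀) * μ x else 0) ≤ ∑' x, m x := by
    intro F
    refine le_trans (Finset.sum_le_sum fun x _ => ?_) (hms.sum_le_tsum F fun x _ => hm0 x)
    split_ifs with h
    · have h1 : x ∈ {x : G | 1 ≤ d x x₀} := hR1.trans h
      rw [hm, Set.indicator_of_mem h1]
      refine mul_le_mul_of_nonneg_right (Real.exp_le_exp.2 ?_) (hμ x).le
      nlinarith [hpow x h]
    · exact hm0 x
  have key : ∀ u : G → ℝ, (∃ C : ℝ, ∀ x, |u x| ≤ C) →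
      (∀ x : G, ∑' y, ω x y * (u y - u x) = μ x * (V x * u x)) → ∀ x, u x ≤ 0 :=
    fun u hb hu => aux_nonpos μ ω d hμ hω_symm hω_nonneg hloc hconn hd_symm hd_nonneg hd_tri
      (max s 0) (le_max_right _ _) (fun x y h => (hs x y h).trans (le_max_left _ _)) hballs hintr
      V x₀ R c₀ hR1 hc₀ hV₀ hV1 Λ hΛ₀ (∑' x, m x) (tsum_nonneg hm0) hQ u hb hu
  have hu' : ∀ x : G, ∑' y, ω x y * (u y - u x) = μ x * (V x * u x) := by
    intro x
    have h := hu x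
    have h1 := (hμ x).ne'
    rw [← sub_eq_zero.1 h, mul_inv_cancel_left₀ h1]
  intro x
  refine le_antisymm (key u hbd hu' x) ?_
  have := key (fun y => -u y) (by simpa using hbd) (by
    intro x
    have h := hu' x
    have e : ∀ y, ω x y * (-u y - -u x) = -(ω x y * (u y - u x)) := fun y => by ring
    simp only [e, tsum_neg, h]
    ring) x
  simpa using this
end

section
/- Let (G, ω, μ) be a connected, locally finite weighted graph with a pseudo metric d of finite jump size whose balls are finite sets, and let V : G → ℝ with V ≥ 0. Let u : G → ℝ satisfy Δu − Vu = 0 on G and 0 ≤ u ≤ 1, let T > 0, and set v(x,t) := e^t u(x) − 1 for (x,t) ∈ G × [0,T]. Let η : G → ℝ with η ≥ 0 and finite support, and let ξ : G × [0,T] → ℝ with ξ(x,·) ∈ C¹([0,T]) for every x ∈ G, such that (η²(y) − η²(x))(e^{ξ(y,t)} − e^{ξ(x,t)}) ≥ 0 for all x, y ∈ G with x ∼ y and all t ∈ [0,T]. Then ∑_{x∈G} V(x) η²(x) v₊²(x,T) e^{ξ(x,T)} μ(x) − ∑_{x∈G} V(x) η²(x) v₊²(x,0) e^{ξ(x,0)}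 μ(x) ≤ ∫₀^T ∑_{x∈G} v₊²(x,t) η²(x) e^{ξ(x,t)} { V(x) ξ_t(x,t) μ(x) + (1/2) ∑_{y∈G} ω(x,y)(1 − e^{ξ(y,t) − ξ(x,t)})² } dt + 2 ∫₀^T ∑_{x,y∈G} v₊²(x,t) e^{ξ(y,t)} (η(y) − η(x))² ω(x,y) dt, where v₊ = max{v, 0}. -/
open MeasureTheory

theorem aux_hasDerivAt_maxsq (x : ℝ) :
    HasDerivAt (fun y : ℝ => (max y 0) ^ 2) (2 * max x 0) x := by
  rcases lt_trichotomy x 0 with h | h | h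
  · rw [max_eq_right h.le]
    have h1 : (fun y : ℝ => (max y 0) ^ 2) =ᶠ[nhds x] fun _ => 0 := by
      filter_upwards [Iio_mem_nhds h] with y hy
      rw [max_eq_right (le_of_lt hy)]; norm_num
    simpa using (hasDerivAt_const x (0 : ℝ)).congr_of_eventuallyEq h1
  · subst h
    have h2 : HasDerivAt (fun y : ℝ => y ^ 2) 0 0 := by
      simpa using hasDerivAt_pow 2 (0 : ℝ)
    rw [hasDerivAt_iff_isLittleO] at h2 ⊢
    refine Asymptotics.IsBigO.trans_isLittleO ?_ h2
    refine Asymptotics.IsBigO.of_bound 1 (Filter.Eventually.of_forall fun y => ?_)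
    simp only [max_self, mul_zero, smul_zero, sub_zero, one_mul, Real.norm_eq_abs]
    norm_num
    rcases le_total y 0 with hy | hy
    · simp [max_eq_right hy]; positivity
    · simp [max_eq_left hy]
  · rw [max_eq_left h.le]
    have h1 : (fun y : ℝ => (max y 0) ^ 2) =ᶠ[nhds x] fun y => y ^ 2 := by
      filter_upwards [Ioi_mem_nhds h] with y hy
      rw [max_eq_left (le_of_lt hy)]
    simpa using (hasDerivAt_pow 2 x).congr_of_eventuallyEq h1

/-- Elementary inequality for a pair of vertices. -/
theorem aux_pair (a b A B p q : ℝ) (hA : 0 < A) (hB : 0 < B)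
    (hc : 0 ≤ (b ^ 2 - a ^ 2) * (B - A)) :
    2 * (a ^ 2 * A * (p * (q - p))) + 2 * (b ^ 2 * B * (q * (p - q))) ≤
      (1 / 2 * (p ^ 2 * a ^ 2 * A * (1 - B / A) ^ 2) + 2 * (p ^ 2 * B * (b - a) ^ 2))
      + (1 / 2 * (q ^ 2 * b ^ 2 * B * (1 - A / B) ^ 2) + 2 * (q ^ 2 * A * (a - b) ^ 2)) := by
  obtain ⟨k, rfl⟩ : ∃ k, B = A * k := ⟨B / A, by field_simp⟩
  have e1 : A * k / A = k := by field_simp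
  have hk : 0 < k := by
    by_contra h
    nlinarith
  have h1 : 0 ≤ a ^ 2 * A * (p * (1 - k) - (q - p)) ^ 2 := by positivity
  have h2 : 0 ≤ b ^ 2 * (A * k) * (q * (1 - A / (A * k)) - (p - q)) ^ 2 := by positivity
  have e2 : (A * k) * (1 - A / (A * k)) = A * k - A := by field_simp
  have h3 : 0 ≤ (A * k) * (4 * p * (b - a) + (b + a) * (q - p)) ^ 2 := by positivity
  have h4 : 0 ≤ A * (4 * q * (a - b) + (b + a) * (p - q)) ^ 2 := by positivity
  have h5 : 0 ≤ (A + A * k) * ((b - a) * (p - q)) ^ 2 := by positivity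
  have h6 : 0 ≤ ((b ^ 2 - a ^ 2) * (A * k - A)) * (p - q) ^ 2 := by positivity
  rw [e1]
  generalize 1 - A / (A * k) = m at *
  have e3 : b ^ 2 * q * (p - q) * ((A * k) * m) = b ^ 2 * q * (p - q) * (A * k - A) := by rw [e2]
  linarith

/-- **Proposition 4.1** (a priori estimate). For a solution `u` of `Δu − Vu = 0` with
`0 ≤ u ≤ 1`, with `v(x,t) = eᵗ u(x) − 1`, a nonnegative finitely supported `η` and a
test function `ξ` (with `ξ(x,·) ∈ C¹([0,T])`) such that
`(η²(y) − η²(x))(e^{ξ(y,t)} − e^{ξ(x,t)}) ≥ 0` whenever `x ∼ y`, the key a priori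
estimate (4.5) for `v₊` holds. -/
theorem stmt6 {G : Type*} [Countable G] [Infinite G]
    (μ : G → ℝ) (ω : G → G → ℝ) (d : G → G → ℝ)
    (hμ : ∀ x, 0 < μ x)
    (hω_symm : ∀ x y, ω x y = ω y x)
    (hω_diag : ∀ x, ω x x = 0)
    (hω_nonneg : ∀ x y, 0 ≤ ω x y)
    (hω_sum : ∀ x, Summable fun y => ω x y)
    (hloc : ∀ x : G, {y : G | 0 < ω x y}.Finite)
    (hconn : ∀ x y : G, x ≠ y → ∃ (n : ℕ) (p : ℕ → G),
      p 0 = x ∧ p n = y ∧ ∀ i < n, 0 < ω (p i) (p (i + 1)))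
    (hd_symm : ∀ x y, d x y = d y x)
    (hd_diag : ∀ x, d x x = 0)
    (hd_nonneg : ∀ x y, 0 ≤ d x y)
    (hd_tri : ∀ x y z, d x y ≤ d x z + d z y)
    (s : ℝ) (hs : ∀ x y, 0 < ω x y → d x y ≤ s)
    (hballs : ∀ (x : G) (r : ℝ), {y : G | d y x < r}.Finite)
    (V : G → ℝ) (hV₀ : ∀ x, 0 ≤ V x)
    (u : G → ℝ) (hu₀ : ∀ x, 0 ≤ u x) (hu₁ : ∀ x, u x ≤ 1)
    (hu_eq : ∀ x : G, (μ x)⁻¹ * (∑' y, ω x y * (u y - u x)) - V x * u x = 0)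
    (T : ℝ) (hT : 0 < T)
    (η : G → ℝ) (hη₀ : ∀ x, 0 ≤ η x) (hη_fin : (Function.support η).Finite)
    (ξ : G → ℝ → ℝ) (hξC1 : ∀ x : G, ContDiffOn ℝ 1 (ξ x) (Set.Icc 0 T))
    (hcomp : ∀ x y : G, 0 < ω x y → ∀ t ∈ Set.Icc (0 : ℝ) T,
      0 ≤ (η y ^ 2 - η x ^ 2) * (Real.exp (ξ y t) - Real.exp (ξ x t))) :
    (∑' x : G, V x * η x ^ 2 * (max (Real.exp T * u x - 1) 0) ^ 2
        * Real.exp (ξ x T) * μ x)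
      - (∑' x : G, V x * η x ^ 2 * (max (Real.exp 0 * u x - 1) 0) ^ 2
        * Real.exp (ξ x 0) * μ x)
    ≤ (∫ t in (0 : ℝ)..T, ∑' x : G,
          (max (Real.exp t * u x - 1) 0) ^ 2 * η x ^ 2 * Real.exp (ξ x t) *
            (V x * derivWithin (ξ x) (Set.Icc 0 T) t * μ x
              + (1 / 2) * ∑' y : G, ω x y * (1 - Real.exp (ξ y t - ξ x t)) ^ 2))
      + 2 * ∫ t in (0 : ℝ)..T, ∑' p : G × G,
          (max (Real.exp t * u p.1 - 1) 0) ^ 2 * Real.exp (ξ p.2 t)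
            * (η p.2 - η p.1) ^ 2 * ω p.1 p.2 := by
  classical
  -- the finite set carrying all sums
  obtain ⟨S, hS0, hS1⟩ : ∃ S : Finset G, (∀ x, η x ≠ 0 → x ∈ S) ∧
      (∀ x y, η x ≠ 0 → ω x y ≠ 0 → y ∈ S) := by
    have hfin : (Function.support η ∪ ⋃ x ∈ Function.support η, {y : G | 0 < ω x y}).Finite :=
      hη_fin.union (hη_fin.biUnion fun x _ => hloc x)
    refine ⟨hfin.toFinset, fun x hx => ?_, fun x y hx hy => ?_⟩
    · rw [Set.Finite.mem_toFinset]
      exact Or.inl hx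
    · rw [Set.Finite.mem_toFinset]
      refine Or.inr ?_
      simp only [Set.mem_iUnion]
      exact ⟨x, hx, lt_of_le_of_ne (hω_nonneg x y) (Ne.symm hy)⟩
  have hη0 : ∀ x, x ∉ S → η x = 0 := fun x hx => by
    by_contra h
    exact hx (hS0 x h)
  have hω0 : ∀ x y, η x ≠ 0 → y ∉ S → ω x y = 0 := fun x y hx hy => by
    by_contra h
    exact hy (hS1 x y hx h)
  -- reduction of the sums
  have hF : ∀ t : ℝ, (∑' x : G, V x * η x ^ 2 * (max (Real.exp t * u x - 1) 0) ^ 2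
        * Real.exp (ξ x t) * μ x) = ∑ x ∈ S, V x * η x ^ 2 * (max (Real.exp t * u x - 1) 0) ^ 2
        * Real.exp (ξ x t) * μ x := fun t =>
    tsum_eq_sum fun x hx => by rw [hη0 x hx]; ring
  have hI1 : ∀ t : ℝ, (∑' x : G,
          (max (Real.exp t * u x - 1) 0) ^ 2 * η x ^ 2 * Real.exp (ξ x t) *
            (V x * derivWithin (ξ x) (Set.Icc 0 T) t * μ x
              + (1 / 2) * ∑' y : G, ω x y * (1 - Real.exp (ξ y t - ξ x t)) ^ 2)) =
        ∑ x ∈ S, (max (Real.exp t * u x - 1) 0) ^ 2 * η x ^ 2 * Real.exp (ξ x t) *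
            (V x * derivWithin (ξ x) (Set.Icc 0 T) t * μ x
              + (1 / 2) * ∑ y ∈ S, ω x y * (1 - Real.exp (ξ y t - ξ x t)) ^ 2) := fun t => by
    rw [tsum_eq_sum (s := S) fun x hx => by rw [hη0 x hx]; ring]
    refine Finset.sum_congr rfl fun x _ => ?_
    by_cases hx : η x = 0
    · rw [hx]; ring
    · rw [tsum_eq_sum (s := S) fun y hy => by rw [hω0 x y hx hy]; ring]
  have hI2 : ∀ t : ℝ, (∑' p : G × G,
          (max (Real.exp t * u p.1 - 1) 0) ^ 2 * Real.exp (ξ p.2 t)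
            * (η p.2 - η p.1) ^ 2 * ω p.1 p.2) =
        ∑ x ∈ S, ∑ y ∈ S, (max (Real.exp t * u x - 1) 0) ^ 2 * Real.exp (ξ y t)
            * (η y - η x) ^ 2 * ω x y := fun t => by
    rw [tsum_eq_sum (s := S ×ˢ S), Finset.sum_product]
    rintro ⟨x, y⟩ hxy
    simp only
    by_cases hw : ω x y = 0
    · rw [hw]; ring
    · have hx : η x = 0 := by
        by_contra h
        exact hxy (Finset.mem_product.2 ⟨hS0 x h, hS1 x y h hw⟩)
      have hy : η y = 0 := by
        by_contra h
        exact hxy (Finset.mem_product.2 ⟨hS1 y x h (by rwa [hω_symm]), hS0 y h⟩)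
      rw [hx, hy]; ring
  rw [hF T, hF 0]
  simp_rw [hI1, hI2]
  -- continuity
  have hcξ : ∀ x, ContinuousOn (ξ x) (Set.Icc 0 T) := fun x => (hξC1 x).continuousOn
  have hcd : ∀ x, ContinuousOn (derivWithin (ξ x) (Set.Icc 0 T)) (Set.Icc 0 T) := fun x =>
    (hξC1 x).continuousOn_derivWithin (uniqueDiffOn_Icc hT) le_rfl
  have hcE : ∀ x, ContinuousOn (fun t => Real.exp (ξ x t)) (Set.Icc 0 T) := fun x =>
    Real.continuous_exp.comp_continuousOn (hcξ x)
  have hcE2 : ∀ x y, ContinuousOn (fun t => Real.exp (ξ y t - ξ x t)) (Set.Icc 0 T) :=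
    fun x y => Real.continuous_exp.comp_continuousOn ((hcξ y).sub (hcξ x))
  have hcw : ∀ x, ContinuousOn (fun t => (max (Real.exp t * u x - 1) 0) ^ 2) (Set.Icc 0 T) :=
    fun x => by
      apply Continuous.continuousOn
      fun_prop
  have hc0 : ContinuousOn (fun t => ∑ x ∈ S, V x * η x ^ 2 * (max (Real.exp t * u x - 1) 0) ^ 2
        * Real.exp (ξ x t) * μ x) (Set.Icc 0 T) :=
    continuousOn_finsetSum _ fun x _ =>
      ((continuousOn_const.mul (hcw x)).mul (hcE x)).mul continuousOn_const
  have hc1 : ContinuousOn (fun t => ∑ x ∈ S,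
        (max (Real.exp t * u x - 1) 0) ^ 2 * η x ^ 2 * Real.exp (ξ x t) *
            (V x * derivWithin (ξ x) (Set.Icc 0 T) t * μ x
              + (1 / 2) * ∑ y ∈ S, ω x y * (1 - Real.exp (ξ y t - ξ x t)) ^ 2))
        (Set.Icc 0 T) :=
    continuousOn_finsetSum _ fun x _ =>
      (((hcw x).mul continuousOn_const).mul (hcE x)).mul
        (((continuousOn_const.mul (hcd x)).mul continuousOn_const).add
          (continuousOn_const.mul (continuousOn_finsetSum _ fun y _ =>
            continuousOn_const.mul ((continuousOn_const.sub (hcE2 x y)).pow 2))))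
  have hc2 : ContinuousOn (fun t => ∑ x ∈ S, ∑ y ∈ S,
        (max (Real.exp t * u x - 1) 0) ^ 2 * Real.exp (ξ y t)
            * (η y - η x) ^ 2 * ω x y) (Set.Icc 0 T) :=
    continuousOn_finsetSum _ fun x _ => continuousOn_finsetSum _ fun y _ =>
      (((hcw x).mul (hcE y)).mul continuousOn_const).mul continuousOn_const
  have hc3 : ContinuousOn (fun t => 2 * ∑ x ∈ S, ∑ y ∈ S,
        (max (Real.exp t * u x - 1) 0) ^ 2 * Real.exp (ξ y t)
            * (η y - η x) ^ 2 * ω x y) (Set.Icc 0 T) := continuousOn_const.mul hc2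
  rw [← intervalIntegral.integral_const_mul, ← intervalIntegral.integral_add
    (hc1.intervalIntegrable_of_Icc hT.le)
    (hc3.intervalIntegrable_of_Icc hT.le)]
  refine intervalIntegral.sub_le_integral_of_hasDeriv_right_of_le hT.le hc0
    (g' := fun t => ∑ x ∈ S, V x * η x ^ 2 * μ x *
      ((2 * max (Real.exp t * u x - 1) 0 * (Real.exp t * u x)) * Real.exp (ξ x t) +
        (max (Real.exp t * u x - 1) 0) ^ 2 *
          (Real.exp (ξ x t) * derivWithin (ξ x) (Set.Icc 0 T) t)))
    ?_ (hc1.add hc3).integrableOn_Icc ?_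
  · intro t ht
    refine HasDerivAt.hasDerivWithinAt (HasDerivAt.fun_sum fun x _ => ?_)
    have hξd : HasDerivAt (ξ x) (derivWithin (ξ x) (Set.Icc 0 T) t) t :=
      ((hξC1 x).differentiableOn one_ne_zero t
        (Set.Ioo_subset_Icc_self ht)).hasDerivWithinAt.hasDerivAt (Icc_mem_nhds ht.1 ht.2)
    have hv : HasDerivAt (fun t => Real.exp t * u x - 1) (Real.exp t * u x) t :=
      ((Real.hasDerivAt_exp t).mul_const _).sub_const _
    have hw := (aux_hasDerivAt_maxsq (Real.exp t * u x - 1)).comp t hv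
    have := (hw.mul hξd.exp).const_mul (V x * η x ^ 2 * μ x)
    refine this.congr_of_eventuallyEq (Filter.Eventually.of_forall fun r => ?_)
    simp only [Pi.mul_apply, Function.comp]
    ring
  · intro t ht
    have ht' := Set.Ioo_subset_Icc_self ht
    -- pass to a double sum
    set f : G → G → ℝ := fun x y => ω x y *
      (2 * (η x ^ 2 * Real.exp (ξ x t) * (max (Real.exp t * u x - 1) 0 *
          (max (Real.exp t * u y - 1) 0 - max (Real.exp t * u x - 1) 0)))
        - (1 / 2 * ((max (Real.exp t * u x - 1) 0) ^ 2 * η x ^ 2 * Real.exp (ξ x t) *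
            (1 - Real.exp (ξ y t - ξ x t)) ^ 2)
          + 2 * ((max (Real.exp t * u x - 1) 0) ^ 2 * Real.exp (ξ y t) * (η y - η x) ^ 2)))
      with hf
    have hff : ∀ x y, f x y + f y x ≤ 0 := by
      intro x y
      rcases (hω_nonneg x y).eq_or_lt with h0 | h0
      · simp only [hf, ← hω_symm x y, ← h0]; simp
      · have := aux_pair (η x) (η y) (Real.exp (ξ x t)) (Real.exp (ξ y t))
          (max (Real.exp t * u x - 1) 0) (max (Real.exp t * u y - 1) 0)
          (Real.exp_pos _) (Real.exp_pos _) (hcomp x y h0 t ht')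
        simp only [hf, ← hω_symm x y, Real.exp_sub]
        rw [← mul_add]
        exact mul_nonpos_of_nonneg_of_nonpos h0.le (by linarith)
    have hsum : ∑ x ∈ S, ∑ y ∈ S, f x y ≤ 0 := by
      have h1 : ∑ x ∈ S, ∑ y ∈ S, f x y = ∑ x ∈ S, ∑ y ∈ S, f y x := Finset.sum_comm
      have h2 : ∑ x ∈ S, ∑ y ∈ S, (f x y + f y x) ≤ 0 :=
        Finset.sum_nonpos fun x _ => Finset.sum_nonpos fun y _ => hff x y
      simp only [Finset.sum_add_distrib] at h2
      linarith
    rw [← sub_nonpos]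
    refine le_trans ?_ hsum
    rw [sub_le_iff_le_add]
    rw [Finset.mul_sum, ← Finset.sum_add_distrib, ← Finset.sum_add_distrib]
    refine Finset.sum_le_sum fun x _ => ?_
    -- the equation at x
    set w := max (Real.exp t * u x - 1) 0 with hw
    set E := Real.exp (ξ x t) with hE
    set D := derivWithin (ξ x) (Set.Icc 0 T) t with hD
    have hkey : V x * η x ^ 2 * μ x * (2 * w * (Real.exp t * u x) * E) ≤
        ∑ y ∈ S, ω x y * (2 * (η x ^ 2 * E * (w * (max (Real.exp t * u y - 1) 0 - w)))) := by
      by_cases hx : η x = 0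
      · simp [hx]
      have heq : V x * μ x * u x = ∑ y ∈ S, ω x y * (u y - u x) := by
        have h := hu_eq x
        rw [tsum_eq_sum (s := S) fun y hy => by rw [hω0 x y hx hy]; ring] at h
        have hm := (hμ x).ne'
        have h2 : V x * u x = (μ x)⁻¹ * ∑ y ∈ S, ω x y * (u y - u x) := by linarith
        calc V x * μ x * u x = μ x * (V x * u x) := by ring
          _ = _ := by rw [h2, mul_inv_cancel_left₀ hm]
      have : V x * η x ^ 2 * μ x * (2 * w * (Real.exp t * u x) * E) =
          ∑ y ∈ S, ω x y * (2 * (η x ^ 2 * E * (w * (Real.exp t * u y - Real.exp t * u x)))) := by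
        calc _ = (2 * η x ^ 2 * w * Real.exp t * E) * (V x * μ x * u x) := by ring
          _ = _ := by
            rw [heq, Finset.mul_sum]
            exact Finset.sum_congr rfl fun y _ => by ring
      rw [this]
      refine Finset.sum_le_sum fun y _ => mul_le_mul_of_nonneg_left ?_ (hω_nonneg x y)
      have hcore : w * (Real.exp t * u y - Real.exp t * u x) ≤
          w * (max (Real.exp t * u y - 1) 0 - w) := by
        rcases le_total (Real.exp t * u x - 1) 0 with h | h
        · have : w = 0 := max_eq_right h
          simp [this]
        · have h1 : w = Real.exp t * u x - 1 := max_eq_left h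
          have h2 := le_max_left (Real.exp t * u y - 1) 0
          exact mul_le_mul_of_nonneg_left (by linarith) (le_max_right _ _)
      have hE0 : 0 ≤ E := (Real.exp_pos _).le
      have : 0 ≤ η x ^ 2 * E := by positivity
      have := mul_le_mul_of_nonneg_left hcore this
      linarith
    have hfx : ∑ y ∈ S, f x y =
        ∑ y ∈ S, ω x y * (2 * (η x ^ 2 * E * (w * (max (Real.exp t * u y - 1) 0 - w))))
        - w ^ 2 * η x ^ 2 * E * ((1 / 2) * ∑ y ∈ S, ω x y * (1 - Real.exp (ξ y t - ξ x t)) ^ 2)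
        - 2 * ∑ y ∈ S, w ^ 2 * Real.exp (ξ y t) * (η y - η x) ^ 2 * ω x y := by
      simp only [Finset.mul_sum, ← Finset.sum_sub_distrib]
      refine Finset.sum_congr rfl fun y _ => ?_
      simp only [hf]
      ring
    rw [hfx]
    linarith
end
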